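/- The PZ81 correlation energy per particle ε_c(r_s) = γ/(1 + β₁√r_s + β₂ r_s) for r_s > 1 and ε_c(r_s) = A log r_s + B + C r_s log r_s + D r_s for r_s ≤ 1 (with γ, B, D < 0, β₁, β₂ > 0, and the matching conditions γ/(1+β₁+β₂) = B + D and γ/(1+β₁+β₂) + (γ/3)(β₁/2 + β₂)/(1+β₁+β₂)² = B + D − (1/3)(D + A + C)) yields e_c(ρ) = ρ ε_c(r_s(ρ)), r_s = (3/(4πρ))^{1/3}, which satisfies: (i) e_c and v_c = de_c/dρ are continuous on [0,∞) with e_c(0) = v_c(0) = 0; (ii) |v_c(ρ)| ≤ C(1 + ρ^{1/3}) for all ρ ≥ 0, i.e., assumption |v_xc| ≤ c(1+ρ^{p−1}) holds with p = 4/3; (iii) limsup_{ρ→0+} e_c(ρ)/ρ^{4/3} = (4π/3)^{1/3}·γ/β₂ < 0. -/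

import Mathlib

open MeasureTheory Real Filter Set
noncomputable section

/-- Wigner-Seitz radius `r_s = (3/(4πρ))^{1/3}`. -/
def rs (t : ℝ) : ℝ := (3 / (4 * π * t)) ^ ((1:ℝ)/3)

/-!
As a function of the Wigner-Seitz radius `r`, the potential `v = d(ρ ε(r_s(ρ)))/dρ` is
`ε r - (r / 3) ε' r`, because `dr_s/dρ = -(1/3) r_s / ρ`. The matching conditions say exactly that
the energies and the potentials of the two branches agree at `r = 1`, so `ε` is `C¹` on `(0, ∞)`.
The vacuum `ρ → 0⁺` is the limit `r → ∞`, where `r ε r → γ / β₂` while `v` is dominated by `ε`;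
this gives the regularity at `ρ = 0` and the limit of `e_c / ρ ^ (4/3)`. Large `ρ` is small `r`,
where `|log r| ≤ 1 / r` bounds `v` by a multiple of `1 + 1 / r`, and `1 / r` is proportional to
`ρ ^ (1/3)`.
-/

open scoped Topology

theorem tendsto_zero_of_tendsto_mul {𝕜 : Type*} [Field 𝕜] [LinearOrder 𝕜] [IsStrictOrderedRing 𝕜]
    [TopologicalSpace 𝕜] [OrderTopology 𝕜] {f : 𝕜 → 𝕜} {L : 𝕜}
    (hf : Tendsto (fun x => x * f x) atTop (𝓝 L)) : Tendsto f atTop (𝓝 0) := by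
  refine (hf.div_atTop tendsto_id).congr' ?_
  filter_upwards [eventually_ne_atTop 0] with x hx using mul_div_cancel_left₀ _ hx

section Gluing

theorem continuousOn_ite_lt {α β : Type*} [TopologicalSpace α] [LinearOrder α]
    [OrderClosedTopology α] [TopologicalSpace β] {f g : α → β} {s : Set α} {a : α}
    (hval : f a = g a) (hf : ContinuousOn f s) (hg : ContinuousOn g s) :
    ContinuousOn (fun x => if a < x then f x else g x) s := by
  refine ContinuousOn.if ?_ (hf.mono inter_subset_left) (hg.mono inter_subset_left)
  rintro x ⟨_, hx⟩
  obtain rfl : a = x := frontier_lt_subset_eq continuous_const continuous_id hx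
  exact hval

theorem hasDerivAt_ite_lt {F : Type*} [NormedAddCommGroup F] [NormedSpace ℝ F]
    {f g f' g' : ℝ → F} {a x : ℝ} (hval : f a = g a) (hderiv : f' a = g' a)
    (hf : a ≤ x → HasDerivAt f (f' x) x) (hg : x ≤ a → HasDerivAt g (g' x) x) :
    HasDerivAt (fun y => if a < y then f y else g y) (if a < x then f' x else g' x) x := by
  rcases lt_trichotomy x a with hx | rfl | hx
  · rw [if_neg hx.not_gt]
    refine (hg hx.le).congr_of_eventuallyEq ?_
    filter_upwards [gt_mem_nhds hx] with y hy using if_neg hy.not_gt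
  · rw [if_neg (lt_irrefl x), ← hasDerivWithinAt_univ, ← Iic_union_Ici (a := x)]
    refine ((hg le_rfl).hasDerivWithinAt.congr_of_mem (fun y hy => if_neg hy.not_gt)
      self_mem_Iic).union ?_
    rw [← hderiv]
    refine (hf le_rfl).hasDerivWithinAt.congr_of_mem (fun y hy => ?_) self_mem_Ici
    rcases (mem_Ici.1 hy).eq_or_lt with rfl | hy
    · simp only [lt_irrefl, if_false, hval]
    · exact if_pos hy
  · rw [if_pos hx]
    refine (hf hx.le).congr_of_eventuallyEq ?_
    filter_upwards [lt_mem_nhds hx] with y hy using if_pos hy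

end Gluing

section WignerSeitzRadius

theorem rs_pos {t : ℝ} (ht : 0 < t) : 0 < rs t := by
  unfold rs
  positivity

theorem inv_rs {t : ℝ} (ht : 0 ≤ t) :
    (rs t)⁻¹ = (4 * π / 3) ^ ((1 : ℝ) / 3) * t ^ ((1 : ℝ) / 3) := by
  rw [rs, ← inv_rpow (by positivity), ← mul_rpow (by positivity) ht, inv_div, mul_div_right_comm]

theorem hasDerivAt_rs {t : ℝ} (ht : 0 < t) : HasDerivAt rs (-(1 / 3) * (rs t / t)) t := by
  have hlin : HasDerivAt (fun s : ℝ => 4 * π * s) (4 * π) t := by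
    simpa using (hasDerivAt_id t).const_mul (4 * π)
  have hbase : HasDerivAt (fun s : ℝ => 3 / (4 * π * s)) (-(3 / (4 * π * t)) / t) t := by
    refine ((hasDerivAt_const t (3 : ℝ)).div hlin (by positivity)).congr_deriv ?_
    field_simp
    ring
  refine (hbase.rpow_const (p := 1 / 3) (Or.inl (by positivity))).congr_deriv ?_
  rw [rpow_sub_one (by positivity), rs]
  field_simp

theorem tendsto_rs_nhdsGT_zero : Tendsto rs (𝓝[>] 0) atTop := by
  have hbase : Tendsto (fun t : ℝ => 3 / (4 * π) * t⁻¹) (𝓝[>] 0) atTop :=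
    tendsto_inv_nhdsGT_zero.const_mul_atTop (by positivity)
  refine ((tendsto_rpow_atTop (y := (1 : ℝ) / 3) (by norm_num)).comp hbase).congr fun t => ?_
  rw [Function.comp_apply, rs, ← div_eq_mul_inv, div_div]

end WignerSeitzRadius

section LocalDensity

/-- A function `f` of the Wigner-Seitz radius, read as a function of the density `t` and extended
by `0` to the vacuum `t ≤ 0`, where `rs` takes a junk value. -/
def ofRadius (f : ℝ → ℝ) (t : ℝ) : ℝ := if t ≤ 0 then 0 else f (rs t)

/-- The energy per volume `e(ρ) = ρ ε(r_s(ρ))` of an energy per particle `ε`, as a function of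
the density. -/
def energyDensity (ε : ℝ → ℝ) (t : ℝ) : ℝ := t * ofRadius ε t

/-- The potential `v = d(ρ ε(r_s(ρ)))/dρ` of an energy per particle `ε`, expressed as a function of
the Wigner-Seitz radius `r`. -/
def radialPotential (ε : ℝ → ℝ) (r : ℝ) : ℝ := ε r - r / 3 * deriv ε r

variable {f ε : ℝ → ℝ} {t : ℝ}

@[simp]
theorem ofRadius_zero (f : ℝ → ℝ) : ofRadius f 0 = 0 := if_pos le_rfl

theorem ofRadius_of_pos (f : ℝ → ℝ) (ht : 0 < t) : ofRadius f t = f (rs t) := if_neg ht.not_ge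

theorem energyDensity_eq_ite (ε : ℝ → ℝ) :
    energyDensity ε = fun t => if t ≤ 0 then 0 else t * ε (rs t) :=
  funext fun t => by rw [energyDensity, ofRadius, mul_ite, mul_zero]

theorem ofRadius_eventuallyEq (f : ℝ → ℝ) (ht : 0 < t) : ofRadius f =ᶠ[𝓝 t] f ∘ rs := by
  filter_upwards [lt_mem_nhds ht] with s hs using ofRadius_of_pos f hs

theorem tendsto_ofRadius_nhdsGT_zero {l : Filter ℝ} (hf : Tendsto f atTop l) :
    Tendsto (ofRadius f) (𝓝[>] 0) l := by
  refine (hf.comp tendsto_rs_nhdsGT_zero).congr' ?_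
  filter_upwards [self_mem_nhdsWithin] with t ht using (ofRadius_of_pos f ht).symm

theorem continuousOn_ofRadius (hf : ContinuousOn f (Ioi 0)) (hlim : Tendsto f atTop (𝓝 0)) :
    ContinuousOn (ofRadius f) (Ici 0) := by
  intro t ht
  rcases (mem_Ici.1 ht).eq_or_lt with rfl | ht
  · rw [← continuousWithinAt_Ioi_iff_Ici, ContinuousWithinAt, ofRadius_zero]
    exact tendsto_ofRadius_nhdsGT_zero hlim
  · have hcomp : ContinuousAt (f ∘ rs) t :=
      (hf.continuousAt (Ioi_mem_nhds (rs_pos ht))).comp (hasDerivAt_rs ht).continuousAt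
    exact (hcomp.congr (ofRadius_eventuallyEq f ht).symm).continuousWithinAt

theorem abs_ofRadius_le {M : ℝ} (hf : ∀ r, 0 < r → |f r| ≤ M * (1 + r⁻¹)) (ht : 0 ≤ t) :
    |ofRadius f t| ≤ M * (1 + (4 * π / 3) ^ ((1 : ℝ) / 3)) * (1 + t ^ ((1 : ℝ) / 3)) := by
  have hM : 0 ≤ M :=
    nonneg_of_mul_nonneg_left ((abs_nonneg _).trans (hf 1 one_pos)) (by positivity)
  rcases ht.eq_or_lt with rfl | ht
  · rw [ofRadius_zero, abs_zero]
    positivity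
  · have hK : 0 ≤ (4 * π / 3) ^ ((1 : ℝ) / 3) := by positivity
    have hp : 0 ≤ t ^ ((1 : ℝ) / 3) := by positivity
    rw [ofRadius_of_pos f ht, mul_assoc]
    refine (hf _ (rs_pos ht)).trans (mul_le_mul_of_nonneg_left ?_ hM)
    rw [inv_rs ht.le]
    linarith

theorem hasDerivAt_energyDensity (ht : 0 < t) (hε : DifferentiableAt ℝ ε (rs t)) :
    HasDerivAt (energyDensity ε) (ofRadius (radialPotential ε) t) t := by
  have hcomp : HasDerivAt (ofRadius ε) (deriv ε (rs t) * (-(1 / 3) * (rs t / t))) t :=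
    (hε.hasDerivAt.comp t (hasDerivAt_rs ht)).congr_of_eventuallyEq (ofRadius_eventuallyEq ε ht)
  refine ((hasDerivAt_id t).mul hcomp).congr_deriv ?_
  rw [ofRadius_of_pos _ ht, ofRadius_of_pos _ ht, radialPotential, id]
  field_simp
  ring

theorem hasDerivWithinAt_energyDensity_zero (hlim : Tendsto ε atTop (𝓝 0)) :
    HasDerivWithinAt (energyDensity ε) 0 (Ici 0) 0 := by
  rw [hasDerivWithinAt_iff_tendsto_slope, Ici_sdiff_left]
  refine (tendsto_ofRadius_nhdsGT_zero hlim).congr' ?_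
  filter_upwards [self_mem_nhdsWithin] with t ht
  rw [slope_def_field, energyDensity, energyDensity, zero_mul, sub_zero, sub_zero,
    mul_div_cancel_left₀ _ (mem_Ioi.1 ht).ne']

theorem hasDerivWithinAt_energyDensity (hε : ∀ r, 0 < r → DifferentiableAt ℝ ε r)
    (hlim : Tendsto ε atTop (𝓝 0)) (ht : 0 ≤ t) :
    HasDerivWithinAt (energyDensity ε) (ofRadius (radialPotential ε) t) (Ici 0) t := by
  rcases ht.eq_or_lt with rfl | ht
  · rw [ofRadius_zero]
    exact hasDerivWithinAt_energyDensity_zero hlim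
  · exact (hasDerivAt_energyDensity ht (hε _ (rs_pos ht))).hasDerivWithinAt

theorem tendsto_energyDensity_div_rpow {L : ℝ} (hε : Tendsto (fun r => r * ε r) atTop (𝓝 L)) :
    Tendsto (fun t => energyDensity ε t / t ^ ((4 : ℝ) / 3)) (𝓝[>] 0)
      (𝓝 ((4 * π / 3) ^ ((1 : ℝ) / 3) * L)) := by
  refine ((hε.comp tendsto_rs_nhdsGT_zero).const_mul _).congr' ?_
  filter_upwards [self_mem_nhdsWithin] with t (ht : 0 < t)
  have hrs : 0 < rs t := rs_pos ht
  have hp : 0 < t ^ ((1 : ℝ) / 3) := by positivity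
  have hpow : t ^ ((4 : ℝ) / 3) = t * t ^ ((1 : ℝ) / 3) := by
    rw [← rpow_one_add' ht.le (by norm_num)]
    norm_num
  have hK : (4 * π / 3) ^ ((1 : ℝ) / 3) = (rs t)⁻¹ / t ^ ((1 : ℝ) / 3) := by
    rw [inv_rs ht.le, mul_div_cancel_right₀ _ hp.ne']
  rw [energyDensity, ofRadius_of_pos ε ht, hpow, hK, Function.comp_apply]
  field_simp

end LocalDensity

section LowDensity

/-- The PZ81 energy per particle on the low-density branch `r > 1`. -/
def lowDensityEnergy (γ β₁ β₂ r : ℝ) : ℝ := γ / (1 + β₁ * √r + β₂ * r)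

variable {γ β₁ β₂ r : ℝ}

theorem lowDensityEnergy_one (γ β₁ β₂ : ℝ) :
    lowDensityEnergy γ β₁ β₂ 1 = γ / (1 + β₁ + β₂) := by
  rw [lowDensityEnergy, sqrt_one, mul_one, mul_one]

theorem hasDerivAt_lowDensityEnergy (γ : ℝ) (hβ₁ : 0 ≤ β₁) (hβ₂ : 0 ≤ β₂) (hr : 0 < r) :
    HasDerivAt (lowDensityEnergy γ β₁ β₂)
      (-(γ * (β₁ / (2 * √r) + β₂)) / (1 + β₁ * √r + β₂ * r) ^ 2) r := by
  have hden : HasDerivAt (fun r => 1 + β₁ * √r + β₂ * r) (β₁ * (1 / (2 * √r)) + β₂ * 1) r :=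
    (((hasDerivAt_sqrt hr.ne').const_mul β₁).const_add 1).add ((hasDerivAt_id r).const_mul β₂)
  refine ((hasDerivAt_const r γ).div hden (by positivity)).congr_deriv ?_
  ring

theorem radialPotential_lowDensityEnergy (γ : ℝ) (hβ₁ : 0 ≤ β₁) (hβ₂ : 0 ≤ β₂) (hr : 0 < r) :
    radialPotential (lowDensityEnergy γ β₁ β₂) r =
      γ * (1 + 7 / 6 * β₁ * √r + 4 / 3 * β₂ * r) / (1 + β₁ * √r + β₂ * r) ^ 2 := by
  rw [radialPotential, (hasDerivAt_lowDensityEnergy γ hβ₁ hβ₂ hr).deriv, lowDensityEnergy]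
  obtain ⟨s, hs, rfl⟩ : ∃ s, 0 < s ∧ r = s ^ 2 := ⟨√r, by positivity, (sq_sqrt hr.le).symm⟩
  rw [sqrt_sq hs.le]
  field_simp
  ring

theorem radialPotential_lowDensityEnergy_one (γ : ℝ) (hβ₁ : 0 ≤ β₁) (hβ₂ : 0 ≤ β₂) :
    radialPotential (lowDensityEnergy γ β₁ β₂) 1 =
      γ / (1 + β₁ + β₂) + γ / 3 * (β₁ / 2 + β₂) / (1 + β₁ + β₂) ^ 2 := by
  rw [radialPotential, (hasDerivAt_lowDensityEnergy γ hβ₁ hβ₂ one_pos).deriv,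
    lowDensityEnergy_one, sqrt_one]
  ring

theorem continuousOn_radialPotential_lowDensityEnergy (γ : ℝ) (hβ₁ : 0 ≤ β₁) (hβ₂ : 0 ≤ β₂) :
    ContinuousOn (radialPotential (lowDensityEnergy γ β₁ β₂)) (Ioi 0) := by
  refine ContinuousOn.congr (fun r (hr : 0 < r) => ContinuousAt.continuousWithinAt ?_)
    fun r hr => radialPotential_lowDensityEnergy γ hβ₁ hβ₂ hr
  have hden : (1 + β₁ * √r + β₂ * r) ^ 2 ≠ 0 := by positivity
  fun_prop (disch := assumption)

theorem abs_radialPotential_lowDensityEnergy_le (γ : ℝ) (hβ₁ : 0 ≤ β₁) (hβ₂ : 0 ≤ β₂)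
    (hr : 0 < r) :
    |radialPotential (lowDensityEnergy γ β₁ β₂) r| ≤ 4 / 3 * |lowDensityEnergy γ β₁ β₂ r| := by
  have hsqrt : 0 ≤ β₁ * √r := by positivity
  have hden : 0 < 1 + β₁ * √r + β₂ * r := by positivity
  have hnum : 0 ≤ 1 + 7 / 6 * β₁ * √r + 4 / 3 * β₂ * r := by positivity
  rw [radialPotential_lowDensityEnergy γ hβ₁ hβ₂ hr, lowDensityEnergy, abs_div, abs_mul, abs_div,
    abs_of_nonneg hnum, abs_of_pos hden, abs_of_pos (pow_pos hden 2)]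
  calc |γ| * (1 + 7 / 6 * β₁ * √r + 4 / 3 * β₂ * r) / (1 + β₁ * √r + β₂ * r) ^ 2
      ≤ |γ| * (4 / 3 * (1 + β₁ * √r + β₂ * r)) / (1 + β₁ * √r + β₂ * r) ^ 2 := by
        gcongr
        linarith
    _ = 4 / 3 * (|γ| / (1 + β₁ * √r + β₂ * r)) := by field_simp

theorem abs_lowDensityEnergy_le (γ : ℝ) (hβ₁ : 0 ≤ β₁) (hβ₂ : 0 ≤ β₂) (hr : 0 ≤ r) :
    |lowDensityEnergy γ β₁ β₂ r| ≤ |γ| := by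
  have hsqrt : 0 ≤ β₁ * √r := by positivity
  have hlin : 0 ≤ β₂ * r := by positivity
  rw [lowDensityEnergy, abs_div]
  refine div_le_self (abs_nonneg γ) (le_abs.2 (Or.inl ?_))
  linarith

theorem tendsto_mul_lowDensityEnergy (γ β₁ : ℝ) (hβ₂ : β₂ ≠ 0) :
    Tendsto (fun r => r * lowDensityEnergy γ β₁ β₂ r) atTop (𝓝 (γ / β₂)) := by
  have hden : Tendsto (fun r => r⁻¹ + β₁ * (√r)⁻¹ + β₂) atTop (𝓝 (0 + β₁ * 0 + β₂)) :=
    (tendsto_inv_atTop_zero.add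
      ((tendsto_inv_atTop_zero.comp tendsto_sqrt_atTop).const_mul β₁)).add_const β₂
  rw [mul_zero, zero_add, zero_add] at hden
  refine (tendsto_const_nhds.div hden hβ₂).congr' ?_
  filter_upwards [eventually_gt_atTop 0] with r hr
  have hfactor : 1 + β₁ * √r + β₂ * r = r * (r⁻¹ + β₁ * (√r)⁻¹ + β₂) := by
    obtain ⟨s, hs, rfl⟩ : ∃ s, 0 < s ∧ r = s ^ 2 := ⟨√r, by positivity, (sq_sqrt hr.le).symm⟩
    rw [sqrt_sq hs.le]
    field_simp
  rw [lowDensityEnergy, hfactor, ← mul_div_assoc, mul_div_mul_left _ _ hr.ne', Pi.div_apply]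

end LowDensity

section HighDensity

/-- The PZ81 energy per particle on the high-density branch `r ≤ 1`. -/
def highDensityEnergy (A B C D r : ℝ) : ℝ := A * log r + B + C * r * log r + D * r

variable {r : ℝ}

theorem highDensityEnergy_one (A B C D : ℝ) : highDensityEnergy A B C D 1 = B + D := by
  simp [highDensityEnergy]

theorem hasDerivAt_highDensityEnergy (A B C D : ℝ) (hr : r ≠ 0) :
    HasDerivAt (highDensityEnergy A B C D) (A / r + C * log r + C + D) r := by
  have hlog : HasDerivAt log r⁻¹ r := hasDerivAt_log hr
  refine ((((hlog.const_mul A).add_const B).add (((hasDerivAt_id r).const_mul C).mul hlog)).add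
    ((hasDerivAt_id r).const_mul D)).congr_deriv ?_
  rw [id]
  field_simp
  ring

theorem radialPotential_highDensityEnergy (A B C D : ℝ) (hr : r ≠ 0) :
    radialPotential (highDensityEnergy A B C D) r =
      A * log r + (B - A / 3) + 2 / 3 * C * (r * log r) + (2 * D - C) / 3 * r := by
  rw [radialPotential, (hasDerivAt_highDensityEnergy A B C D hr).deriv, highDensityEnergy]
  field_simp
  ring

theorem radialPotential_highDensityEnergy_one (A B C D : ℝ) :
    radialPotential (highDensityEnergy A B C D) 1 = B + D - 1 / 3 * (D + A + C) := by
  rw [radialPotential_highDensityEnergy A B C D one_ne_zero, log_one]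
  ring

theorem continuousOn_radialPotential_highDensityEnergy (A B C D : ℝ) :
    ContinuousOn (radialPotential (highDensityEnergy A B C D)) {0}ᶜ := by
  refine ContinuousOn.congr (fun r (hr : r ≠ 0) => ContinuousAt.continuousWithinAt ?_)
    fun r hr => radialPotential_highDensityEnergy A B C D hr
  fun_prop (disch := assumption)

theorem abs_log_le_inv (hr : 0 < r) (hr1 : r ≤ 1) : |log r| ≤ r⁻¹ := by
  rw [abs_of_nonpos (log_nonpos hr.le hr1)]
  linarith [one_sub_inv_le_log_of_pos hr]

theorem abs_radialPotential_highDensityEnergy_le (A B C D : ℝ) (hr : 0 < r) (hr1 : r ≤ 1) :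
    |radialPotential (highDensityEnergy A B C D) r| ≤
      |A| * r⁻¹ + (|B - A / 3| + |2 / 3 * C| + |(2 * D - C) / 3|) := by
  have hA : |A * log r| ≤ |A| * r⁻¹ := by
    rw [abs_mul]
    gcongr
    exact abs_log_le_inv hr hr1
  have hC : |2 / 3 * C * (r * log r)| ≤ |2 / 3 * C| := by
    rw [abs_mul, mul_comm r]
    exact mul_le_of_le_one_right (abs_nonneg _) (abs_log_mul_self_lt r hr hr1).le
  have hD : |(2 * D - C) / 3 * r| ≤ |(2 * D - C) / 3| := by
    rw [abs_mul, abs_of_pos hr]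
    exact mul_le_of_le_one_right (abs_nonneg _) hr1
  rw [radialPotential_highDensityEnergy A B C D hr.ne']
  calc _ ≤ |A * log r| + |B - A / 3| + |2 / 3 * C * (r * log r)| + |(2 * D - C) / 3 * r| :=
        (abs_add_le _ _).trans (add_le_add_left (abs_add_three _ _ _) _)
    _ ≤ _ := by linarith

end HighDensity

section PZ81

/-- The PZ81 correlation energy per particle `ε_c` as a function of the Wigner-Seitz radius. -/
def pz81Energy (γ A B C D β₁ β₂ r : ℝ) : ℝ :=
  if 1 < r then lowDensityEnergy γ β₁ β₂ r else highDensityEnergy A B C D r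

variable {γ A B C D β₁ β₂ : ℝ}

theorem pz81Energy_eventuallyEq_atTop :
    pz81Energy γ A B C D β₁ β₂ =ᶠ[atTop] lowDensityEnergy γ β₁ β₂ := by
  filter_upwards [eventually_gt_atTop 1] with r hr using if_pos hr

theorem tendsto_mul_pz81Energy (γ A B C D β₁ : ℝ) (hβ₂ : β₂ ≠ 0) :
    Tendsto (fun r => r * pz81Energy γ A B C D β₁ β₂ r) atTop (𝓝 (γ / β₂)) :=
  (tendsto_mul_lowDensityEnergy γ β₁ hβ₂).congr'
    (pz81Energy_eventuallyEq_atTop.symm.mono fun r hr => congrArg (r * ·) hr)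

theorem tendsto_radialPotential_pz81Energy (hβ₁ : 0 ≤ β₁) (hβ₂ : 0 < β₂) :
    Tendsto (radialPotential (pz81Energy γ A B C D β₁ β₂)) atTop (𝓝 0) := by
  have hlow : Tendsto (fun r => 4 / 3 * |lowDensityEnergy γ β₁ β₂ r|) atTop (𝓝 0) := by
    simpa using
      (tendsto_zero_of_tendsto_mul (tendsto_mul_lowDensityEnergy γ β₁ hβ₂.ne')).abs.const_mul
        (4 / 3)
  refine squeeze_zero_norm' ?_ hlow
  filter_upwards [eventually_gt_atTop 1] with r hr
  have heq : pz81Energy γ A B C D β₁ β₂ =ᶠ[𝓝 r] lowDensityEnergy γ β₁ β₂ := by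
    filter_upwards [lt_mem_nhds hr] with s hs using if_pos hs
  rw [norm_eq_abs, radialPotential, heq.eq_of_nhds, heq.deriv_eq]
  exact abs_radialPotential_lowDensityEnergy_le γ hβ₁ hβ₂.le (one_pos.trans hr)

section Matching

variable (hβ₁ : 0 ≤ β₁) (hβ₂ : 0 ≤ β₂)
  (henergy : lowDensityEnergy γ β₁ β₂ 1 = highDensityEnergy A B C D 1)
  (hpotential : radialPotential (lowDensityEnergy γ β₁ β₂) 1 =
    radialPotential (highDensityEnergy A B C D) 1)
include hβ₁ hβ₂ henergy hpotential

theorem hasDerivAt_pz81Energy {r : ℝ} (hr : 0 < r) :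
    HasDerivAt (pz81Energy γ A B C D β₁ β₂)
      (if 1 < r then deriv (lowDensityEnergy γ β₁ β₂) r else deriv (highDensityEnergy A B C D) r)
      r := by
  have hderiv : deriv (lowDensityEnergy γ β₁ β₂) 1 = deriv (highDensityEnergy A B C D) 1 := by
    simp only [radialPotential] at hpotential
    linarith
  exact hasDerivAt_ite_lt henergy hderiv
    (fun _ => (hasDerivAt_lowDensityEnergy γ hβ₁ hβ₂ hr).differentiableAt.hasDerivAt)
    (fun _ => (hasDerivAt_highDensityEnergy A B C D hr.ne').differentiableAt.hasDerivAt)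

theorem radialPotential_pz81Energy {r : ℝ} (hr : 0 < r) :
    radialPotential (pz81Energy γ A B C D β₁ β₂) r =
      if 1 < r then radialPotential (lowDensityEnergy γ β₁ β₂) r
      else radialPotential (highDensityEnergy A B C D) r := by
  rw [radialPotential, (hasDerivAt_pz81Energy hβ₁ hβ₂ henergy hpotential hr).deriv, pz81Energy]
  split_ifs <;> rfl

theorem continuousOn_radialPotential_pz81Energy :
    ContinuousOn (radialPotential (pz81Energy γ A B C D β₁ β₂)) (Ioi 0) :=
  (continuousOn_ite_lt hpotential (continuousOn_radialPotential_lowDensityEnergy γ hβ₁ hβ₂)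
    ((continuousOn_radialPotential_highDensityEnergy A B C D).mono fun _ hr => ne_of_gt hr)).congr
    fun _ hr => radialPotential_pz81Energy hβ₁ hβ₂ henergy hpotential hr

theorem exists_abs_radialPotential_pz81Energy_le :
    ∃ M, 0 < M ∧ ∀ r, 0 < r →
      |radialPotential (pz81Energy γ A B C D β₁ β₂) r| ≤ M * (1 + r⁻¹) := by
  set Mlow := 4 / 3 * |γ| with hMlow
  set Mhigh := |B - A / 3| + |2 / 3 * C| + |(2 * D - C) / 3|
  have hMlow0 : 0 ≤ Mlow := by positivity
  have hMhigh0 : 0 ≤ Mhigh := by positivity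
  refine ⟨Mlow + |A| + Mhigh + 1, by positivity, fun r hr => ?_⟩
  rw [radialPotential_pz81Energy hβ₁ hβ₂ henergy hpotential hr]
  split_ifs with hr1
  · calc |radialPotential (lowDensityEnergy γ β₁ β₂) r|
        ≤ 4 / 3 * |lowDensityEnergy γ β₁ β₂ r| :=
          abs_radialPotential_lowDensityEnergy_le γ hβ₁ hβ₂ hr
      _ ≤ Mlow * 1 := by
          linarith [abs_lowDensityEnergy_le γ hβ₁ hβ₂ hr.le]
      _ ≤ (Mlow + |A| + Mhigh + 1) * (1 + r⁻¹) := by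
          gcongr
          · linarith [abs_nonneg A]
          · linarith [inv_pos.2 hr]
  · calc |radialPotential (highDensityEnergy A B C D) r|
        ≤ |A| * r⁻¹ + Mhigh := abs_radialPotential_highDensityEnergy_le A B C D hr (not_lt.1 hr1)
      _ ≤ (|A| + Mhigh) * (1 + r⁻¹) := by
          have hcross : 0 ≤ |A| + Mhigh * r⁻¹ := by positivity
          linarith
      _ ≤ (Mlow + |A| + Mhigh + 1) * (1 + r⁻¹) :=
          mul_le_mul_of_nonneg_right (by linarith) (by positivity)

end Matching

theorem pz81_satisfies_assumptions_general (hβ₁ : 0 ≤ β₁) (hβ₂ : 0 < β₂)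
    (hmatch1 : γ / (1 + β₁ + β₂) = B + D)
    (hmatch2 : γ / (1 + β₁ + β₂) + (γ / 3) * (β₁ / 2 + β₂) / (1 + β₁ + β₂) ^ 2 =
      B + D - (1 / 3) * (D + A + C)) :
    (energyDensity (pz81Energy γ A B C D β₁ β₂) 0 = 0 ∧
      ContinuousOn (energyDensity (pz81Energy γ A B C D β₁ β₂)) (Ici 0) ∧
      ∃ vc : ℝ → ℝ, vc 0 = 0 ∧ ContinuousOn vc (Ici 0) ∧
        (∀ t ∈ Ici (0 : ℝ), HasDerivWithinAt (energyDensity (pz81Energy γ A B C D β₁ β₂)) (vc t)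
          (Ici 0) t) ∧
        ∃ M : ℝ, 0 < M ∧ ∀ t ≥ (0 : ℝ), |vc t| ≤ M * (1 + t ^ ((1 : ℝ) / 3))) ∧
    Tendsto (fun t => energyDensity (pz81Energy γ A B C D β₁ β₂) t / t ^ ((4 : ℝ) / 3)) (𝓝[>] 0)
      (𝓝 ((4 * π / 3) ^ ((1 : ℝ) / 3) * γ / β₂)) := by
  have henergy : lowDensityEnergy γ β₁ β₂ 1 = highDensityEnergy A B C D 1 := by
    rwa [lowDensityEnergy_one, highDensityEnergy_one]
  have hpotential : radialPotential (lowDensityEnergy γ β₁ β₂) 1 =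
      radialPotential (highDensityEnergy A B C D) 1 := by
    rwa [radialPotential_lowDensityEnergy_one γ hβ₁ hβ₂.le, radialPotential_highDensityEnergy_one]
  have hlim := tendsto_mul_pz81Energy γ A B C D β₁ hβ₂.ne'
  have hderiv : ∀ t ∈ Ici (0 : ℝ), HasDerivWithinAt (energyDensity (pz81Energy γ A B C D β₁ β₂))
      (ofRadius (radialPotential (pz81Energy γ A B C D β₁ β₂)) t) (Ici 0) t := fun t ht =>
    hasDerivWithinAt_energyDensity
      (fun r hr => (hasDerivAt_pz81Energy hβ₁ hβ₂.le henergy hpotential hr).differentiableAt)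
      (tendsto_zero_of_tendsto_mul hlim) ht
  obtain ⟨M, hM, hbound⟩ :=
    exists_abs_radialPotential_pz81Energy_le hβ₁ hβ₂.le henergy hpotential
  refine ⟨⟨zero_mul _, fun t ht => (hderiv t ht).continuousWithinAt,
    ofRadius (radialPotential (pz81Energy γ A B C D β₁ β₂)), ofRadius_zero _,
    continuousOn_ofRadius
      (continuousOn_radialPotential_pz81Energy hβ₁ hβ₂.le henergy hpotential)
      (tendsto_radialPotential_pz81Energy hβ₁ hβ₂), hderiv,
    M * (1 + (4 * π / 3) ^ ((1 : ℝ) / 3)), by positivity,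
    fun t ht => abs_ofRadius_le hbound ht⟩, ?_⟩
  rw [mul_div_assoc]
  exact tendsto_energyDensity_div_rpow hlim

end PZ81

/-- the PZ81 correlation energy per particle
`ε_c(r_s) = γ/(1+β₁√r_s+β₂r_s)` for `r_s > 1` and
`ε_c(r_s) = A log r_s + B + C r_s log r_s + D r_s` for `r_s ≤ 1`
(with `γ, B, D < 0`, `β₁, β₂ > 0` and the stated matching conditions) yields
`e_c(ρ) = ρ ε_c(r_s(ρ))` which satisfies:
(i) `e_c` and `v_c = de_c/dρ` are continuous on `[0,∞)` with `e_c(0) = v_c(0) = 0`;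
(ii) `|v_c(ρ)| ≤ C(1+ρ^{1/3})`, i.e. the growth assumption holds with `p = 4/3`;
(iii) `limsup_{ρ→0+} e_c(ρ)/ρ^{4/3} = (4π/3)^{1/3} γ/β₂ < 0`. -/
theorem pz81_satisfies_assumptions
    (gam Ac Bc Cc Dc b1 b2 : ℝ)
    (hgam : gam < 0) (hBc : Bc < 0) (hDc : Dc < 0)
    (hb1 : 0 < b1) (hb2 : 0 < b2)
    -- matching conditions (continuity of ε_c and of v_c at r_s = 1)
    (hmatch1 : gam / (1 + b1 + b2) = Bc + Dc)
    (hmatch2 : gam / (1 + b1 + b2)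
        + (gam / 3) * (b1 / 2 + b2) / (1 + b1 + b2) ^ 2
      = Bc + Dc - (1/3) * (Dc + Ac + Cc))
    (epsc ec : ℝ → ℝ)
    (heps : epsc = fun r => if 1 < r then gam / (1 + b1 * Real.sqrt r + b2 * r)
      else Ac * Real.log r + Bc + Cc * r * Real.log r + Dc * r)
    (hec : ec = fun t => if t ≤ 0 then 0 else t * epsc (rs t)) :
    -- (i)
    (ec 0 = 0 ∧ ContinuousOn ec (Set.Ici 0) ∧
      ∃ vc : ℝ → ℝ, vc 0 = 0 ∧ ContinuousOn vc (Set.Ici 0) ∧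
        (∀ t ∈ Set.Ici (0:ℝ), HasDerivWithinAt ec (vc t) (Set.Ici 0) t) ∧
        -- (ii) the growth bound with p = 4/3
        (∃ C : ℝ, 0 < C ∧ ∀ t ≥ (0:ℝ), |vc t| ≤ C * (1 + t ^ ((1:ℝ)/3)))) ∧
    -- (iii)
    (Filter.limsup (fun t => ((ec t / t ^ ((4:ℝ)/3) : ℝ) : EReal))
        (nhdsWithin 0 (Set.Ioi 0))
      = (((4 * π / 3) ^ ((1:ℝ)/3) * gam / b2 : ℝ) : EReal) ∧
      (4 * π / 3) ^ ((1:ℝ)/3) * gam / b2 < 0) := by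
  obtain rfl : ec = energyDensity (pz81Energy gam Ac Bc Cc Dc b1 b2) := by
    rw [energyDensity_eq_ite, hec, heps]
    rfl
  obtain ⟨hregular, hlim⟩ := pz81_satisfies_assumptions_general hb1.le hb2 hmatch1 hmatch2
  exact ⟨hregular, ((continuous_coe_real_ereal.tendsto _).comp hlim).limsup_eq,
    div_neg_of_neg_of_pos (mul_neg_of_pos_of_neg (by positivity) hgam) hb2⟩
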